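/- Let w̃ᵢ = Γ_pr⁻¹ ŵᵢ and define P_r = Σ_{i=1}^{r} ŵᵢ w̃ᵢᵀ and Ĝ_r = G P_r. Then P_r is an oblique projector, i.e. P_r² = P_r, and the posterior covariance matrix of the Bayesian linear model with forward operator Ĝ_r (in place of G), namely ( Ĝ_rᵀ Γ_obs⁻¹ Ĝ_r + Γ_pr⁻¹ )⁻¹, equals the optimal approximation Γ̂_pos = Γ_pr − Σ_{i=1}^{r} (δᵢ²/(1+δᵢ²)) ŵᵢ ŵᵢᵀ. -/

import Mathlib

open Matrix Finset

/-!
Put `A = Γpr⁻¹`. As the `w i` are `A`-orthonormal, `P` fixes each selected `w i` and `Pᵀ` fixes each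
selected `A w i`; hence `P` is idempotent and `Pᵀ H P = Σ d i • (A w i) (A w i)ᵀ` with `d i = δᵢ²`.
The reduced posterior precision is thus a low-rank update of `A` mapping `w i` to
`(1 + d i) • A w i`, so the rank-one corrections `d i / (1 + d i) • w i (w i)ᵀ` of `Γpr` cancel the
update exactly.
-/

section CommSemiring

variable {R ι κ α : Type*} [CommSemiring R] [Fintype ι]

/-- The matrix `P_r = Σ ŵᵢ w̃ᵢᵀ`, with `w̃ᵢ = A ŵᵢ` and the leading indices `1, …, r` replaced by a
finite set `s`. It projects onto the span of the `w i` when these are `A`-orthonormal. -/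
def obliqueProjector (A : Matrix ι ι R) (w : α → ι → R) (s : Finset α) : Matrix ι ι R :=
  ∑ i ∈ s, vecMulVec (w i) (A *ᵥ w i)

theorem mul_obliqueProjector (M : Matrix κ ι R) (A : Matrix ι ι R) (w : α → ι → R)
    (s : Finset α) :
    M * obliqueProjector A w s = ∑ i ∈ s, vecMulVec (M *ᵥ w i) (A *ᵥ w i) := by
  simp only [obliqueProjector, Matrix.mul_sum, mul_vecMulVec]

variable [DecidableEq α]

theorem sum_vecMulVec_mulVec_of_dual {s : Finset α} {u : α → κ → R} {v : α → ι → R} {x : ι → R}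
    {j : α} (hj : j ∈ s) (hx : ∀ i ∈ s, v i ⬝ᵥ x = if i = j then 1 else 0) :
    (∑ i ∈ s, vecMulVec (u i) (v i)) *ᵥ x = u j := by
  calc (∑ i ∈ s, vecMulVec (u i) (v i)) *ᵥ x
      = ∑ i ∈ s, (v i ⬝ᵥ x) • u i := by
        simp only [sum_mulVec, vecMulVec_mulVec, op_smul_eq_smul]
    _ = ∑ i ∈ s, if i = j then u i else 0 :=
        sum_congr rfl fun i hi ↦ by rw [hx i hi, ite_smul, one_smul, zero_smul]
    _ = u j := by rw [sum_ite_eq' s j u, if_pos hj]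

/-- The vectors `w i`, `i ∈ s`, are orthonormal for the bilinear form `x ⬝ᵥ A *ᵥ y`, where `A` need
not be symmetric. -/
def OrthonormalOn (A : Matrix ι ι R) (w : α → ι → R) (s : Finset α) : Prop :=
  ∀ i ∈ s, ∀ j ∈ s, w i ⬝ᵥ (A *ᵥ w j) = if i = j then 1 else 0

namespace OrthonormalOn

variable {A : Matrix ι ι R} {w : α → ι → R} {s : Finset α}

theorem mulVec_dotProduct (hw : OrthonormalOn A w s) {i j : α} (hi : i ∈ s) (hj : j ∈ s) :
    (A *ᵥ w i) ⬝ᵥ w j = if i = j then 1 else 0 := by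
  rw [dotProduct_comm, hw j hj i hi]
  exact if_congr eq_comm rfl rfl

theorem obliqueProjector_mulVec (hw : OrthonormalOn A w s) {j : α} (hj : j ∈ s) :
    obliqueProjector A w s *ᵥ w j = w j :=
  sum_vecMulVec_mulVec_of_dual hj fun _ hi ↦ hw.mulVec_dotProduct hi hj

theorem obliqueProjector_transpose_mulVec (hw : OrthonormalOn A w s) {j : α} (hj : j ∈ s) :
    (obliqueProjector A w s)ᵀ *ᵥ (A *ᵥ w j) = A *ᵥ w j := by
  simp only [obliqueProjector, transpose_sum, transpose_vecMulVec]
  exact sum_vecMulVec_mulVec_of_dual hj fun i hi ↦ hw i hi j hj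

theorem isIdempotentElem_obliqueProjector (hw : OrthonormalOn A w s) :
    IsIdempotentElem (obliqueProjector A w s) := by
  calc obliqueProjector A w s * obliqueProjector A w s
      = ∑ i ∈ s, vecMulVec (obliqueProjector A w s *ᵥ w i) (A *ᵥ w i) :=
        mul_obliqueProjector ..
    _ = obliqueProjector A w s :=
        sum_congr rfl fun i hi ↦ by rw [hw.obliqueProjector_mulVec hi]

theorem obliqueProjector_transpose_mul_mul (hw : OrthonormalOn A w s) {H : Matrix ι ι R}
    {d : α → R} (heig : ∀ i ∈ s, H *ᵥ w i = d i • (A *ᵥ w i)) :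
    (obliqueProjector A w s)ᵀ * H * obliqueProjector A w s =
      ∑ i ∈ s, d i • vecMulVec (A *ᵥ w i) (A *ᵥ w i) := by
  set P := obliqueProjector A w s
  calc Pᵀ * H * P = ∑ i ∈ s, vecMulVec (Pᵀ *ᵥ (H *ᵥ w i)) (A *ᵥ w i) := by
        simp only [P, mul_obliqueProjector, mulVec_mulVec]
    _ = ∑ i ∈ s, d i • vecMulVec (A *ᵥ w i) (A *ᵥ w i) :=
        sum_congr rfl fun i hi ↦ by
          rw [heig i hi, mulVec_smul, hw.obliqueProjector_transpose_mulVec hi, smul_vecMulVec]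

theorem sum_smul_vecMulVec_add_mulVec (hw : OrthonormalOn A w s) (d : α → R) {j : α} (hj : j ∈ s) :
    (∑ i ∈ s, d i • vecMulVec (A *ᵥ w i) (A *ᵥ w i) + A) *ᵥ w j = (1 + d j) • (A *ᵥ w j) := by
  have hsum : (∑ i ∈ s, d i • vecMulVec (A *ᵥ w i) (A *ᵥ w i)) *ᵥ w j = d j • (A *ᵥ w j) := by
    simp only [← smul_vecMulVec]
    exact sum_vecMulVec_mulVec_of_dual hj fun _ hi ↦ hw.mulVec_dotProduct hi hj
  rw [add_mulVec, hsum, add_smul, one_smul, add_comm]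

end OrthonormalOn

end CommSemiring

theorem OrthonormalOn.sum_smul_vecMulVec_add_mul_sub {R ι α : Type*} [CommRing R] [Fintype ι]
    [DecidableEq ι] [DecidableEq α] {A Γ : Matrix ι ι R} {w : α → ι → R} {s : Finset α}
    (hw : OrthonormalOn A w s) (hA : A.IsSymm) (hAΓ : A * Γ = 1) {c d : α → R}
    (hcd : ∀ i ∈ s, (1 + d i) * c i = d i) :
    (∑ i ∈ s, d i • vecMulVec (A *ᵥ w i) (A *ᵥ w i) + A) *
      (Γ - ∑ i ∈ s, c i • vecMulVec (w i) (w i)) = 1 := by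
  set M := ∑ i ∈ s, d i • vecMulVec (A *ᵥ w i) (A *ᵥ w i) + A with hM
  have hvecMul (i : α) : (A *ᵥ w i) ᵥ* Γ = w i := by
    rw [← vecMul_transpose, hA.eq, vecMul_vecMul, hAΓ, vecMul_one]
  have hMΓ : M * Γ = ∑ i ∈ s, d i • vecMulVec (A *ᵥ w i) (w i) + 1 := by
    simp only [hM, Matrix.add_mul, Matrix.sum_mul, Matrix.smul_mul, vecMulVec_mul, hvecMul, hAΓ]
  have hMw : M * ∑ i ∈ s, c i • vecMulVec (w i) (w i) =
      ∑ i ∈ s, d i • vecMulVec (A *ᵥ w i) (w i) := by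
    rw [Matrix.mul_sum]
    refine sum_congr rfl fun i hi ↦ ?_
    rw [Matrix.mul_smul, mul_vecMulVec, hw.sum_smul_vecMulVec_add_mulVec d hi, smul_vecMulVec,
      smul_smul, mul_comm, hcd i hi]
  rw [Matrix.mul_sub, hMΓ, hMw, add_sub_cancel_left]

theorem optimal_projector_general {K ι κ α : Type*} [Field K] [Fintype ι] [DecidableEq ι]
    [Fintype κ] [DecidableEq α] (G : Matrix κ ι K) (noisePrec : Matrix κ κ K)
    {Γpr : Matrix ι ι K} (hsymm : Γpr.IsSymm) (hunit : IsUnit Γpr)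
    {d : α → K} {w : α → ι → K} {s : Finset α} (hd : ∀ i ∈ s, 1 + d i ≠ 0)
    (heig : ∀ i ∈ s, (Gᵀ * noisePrec * G) *ᵥ w i = d i • (Γpr⁻¹ *ᵥ w i))
    (hw : OrthonormalOn Γpr⁻¹ w s) :
    IsIdempotentElem (obliqueProjector Γpr⁻¹ w s) ∧
      ((G * obliqueProjector Γpr⁻¹ w s)ᵀ * noisePrec * (G * obliqueProjector Γpr⁻¹ w s) +
        Γpr⁻¹)⁻¹ = Γpr - ∑ i ∈ s, (d i / (1 + d i)) • vecMulVec (w i) (w i) := by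
  refine ⟨hw.isIdempotentElem_obliqueProjector, inv_eq_right_inv ?_⟩
  set P := obliqueProjector Γpr⁻¹ w s
  have hHessian : (G * P)ᵀ * noisePrec * (G * P) = Pᵀ * (Gᵀ * noisePrec * G) * P := by
    simp only [transpose_mul, Matrix.mul_assoc]
  rw [hHessian, hw.obliqueProjector_transpose_mul_mul heig]
  exact hw.sum_smul_vecMulVec_add_mul_sub hsymm.inv
    (nonsing_inv_mul Γpr ((isUnit_iff_isUnit_det Γpr).1 hunit))
    fun i hi ↦ mul_div_cancel₀ (d i) (hd i hi)

/-- Corollary 3.2 (optimal projector): `P_r = Σ_{i≤r} ŵᵢ w̃ᵢᵀ` is an oblique projector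
(`P_r² = P_r`), and the posterior covariance of the Bayesian linear model with the reduced
forward operator `Ĝ_r = G P_r` equals the optimal approximation
`Γ̂pos = Γpr − Σ_{i≤r} (δᵢ²/(1+δᵢ²)) ŵᵢ ŵᵢᵀ`. -/
theorem optimal_projector
    (n m r : ℕ) (hn : 0 < n) (hm : 0 < m) (hr : r ≤ n)
    (G : Matrix (Fin m) (Fin n) ℝ)
    (Γobs : Matrix (Fin m) (Fin m) ℝ) (hobs : Γobs.PosDef)
    (Γpr : Matrix (Fin n) (Fin n) ℝ) (hpr : Γpr.PosDef)
    (H : Matrix (Fin n) (Fin n) ℝ)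
    (hH : H = Gᵀ * Γobs⁻¹ * G)
    (δ : Fin n → ℝ) (w : Fin n → Fin n → ℝ)
    (hδ : ∀ i, 0 ≤ δ i)
    (hord : ∀ i j : Fin n, i ≤ j → (δ j) ^ 2 ≤ (δ i) ^ 2)
    (heig : ∀ i, H *ᵥ w i = (δ i) ^ 2 • (Γpr⁻¹ *ᵥ w i))
    (hnorm : ∀ i j, w i ⬝ᵥ (Γpr⁻¹ *ᵥ w j) = if i = j then (1:ℝ) else 0)
    (wt : Fin n → Fin n → ℝ) (hwt : ∀ i, wt i = Γpr⁻¹ *ᵥ w i)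
    (P : Matrix (Fin n) (Fin n) ℝ)
    (hP : P = ∑ i ∈ Finset.univ.filter (fun i : Fin n => (i : ℕ) < r),
      vecMulVec (w i) (wt i))
    (Ghat : Matrix (Fin m) (Fin n) ℝ) (hGhat : Ghat = G * P) :
    P * P = P ∧
      (Ghatᵀ * Γobs⁻¹ * Ghat + Γpr⁻¹)⁻¹ =
        Γpr - ∑ i ∈ Finset.univ.filter (fun i : Fin n => (i : ℕ) < r),
          ((δ i) ^ 2 / (1 + (δ i) ^ 2)) • vecMulVec (w i) (w i) := by
  obtain rfl : wt = fun i ↦ Γpr⁻¹ *ᵥ w i := funext hwt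
  subst hH hP hGhat
  exact optimal_projector_general G Γobs⁻¹ (isHermitian_iff_isSymm.1 hpr.isHermitian) hpr.isUnit
    (fun i _ ↦ by positivity) (fun i _ ↦ heig i) fun i _ j _ ↦ hnorm i j
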